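/- arXiv:1706.09134 — 3 statements merged into one kernel-verified Lean document; each statement's English description precedes it below -/
import Mathlib

section
/- Let q ∈ k \ {0} be not a root of unity. Every rational function f ∈ k(x,y) admits a (τ_{x,q}, σ_y)-reduced form: there exist g, h ∈ k(x,y), finitely many a_{i,j} ∈ k(x)[y] and irreducible d_i ∈ k[x,y] with deg_y(a_{i,j}) < deg_y(d_i), the d_i lying in pairwise distinct (τ_{x,q}, σ_y)-orbits, such that f = Δ_{x,q}(g) + Δ_y(h) + Σ_{i=1}^n Σ_{j=1}^{m_i} a_{i,j}/d_i^j. -/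
/-!
Let `N` be the additive group of all `Δ_{x,q}(g) + Δ_y(h)`. It contains `k(x)[y]`, since Bernoulli
polynomials are antidifferences of the powers of `y`, and it contains `θ(u) - u` for every `θ` in
the group generated by `τ_{x,q}` and `σ_y`. By partial fractions over `k(x)` and Gauss's lemma, `f`
is modulo `k(x)[y]` a sum of proper fractions `a / d ^ j` with `d ∈ k[x,y]` irreducible. If `e` is
the chosen representative of the orbit of `d` and `d = θ(e)`, then `a / d ^ j = θ(b / e ^ j)` is
congruent to `b / e ^ j` modulo `N`, where `b = θ⁻¹(a)` is again a polynomial and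
`deg_y b = deg_y a`.
-/

open Polynomial

noncomputable section

variable (k : Type*) [Field k] [CharZero k]

/-- `k(x,y)` realized as `k(x)(y)`: rational functions in `y` over `k(x) = RatFunc k`. -/
abbrev F2 := RatFunc (RatFunc k)

/-- The element `x` of `k(x,y)`. -/
def Fx : F2 k := RatFunc.C RatFunc.X

/-- The element `y` of `k(x,y)`. -/
def Fy : F2 k := RatFunc.X

/-- The embedding of the constants `k` into `k(x,y)`. -/
def Fc : k →+* F2 k := RatFunc.C.comp RatFunc.C

/-- The embedding of `k(x)` into `k(x,y)`. -/
def FKx : RatFunc k →+* F2 k := RatFunc.C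

/-- The embedding of `k(x)[y]` into `k(x,y)`. -/
def FP : Polynomial (RatFunc k) →+* F2 k := algebraMap _ _

/-- The embedding of `k[x,y]` (realized as `(k[x])[y]`, outer variable `y`) into `k(x)[y]`. -/
def PP : Polynomial (Polynomial k) →+* Polynomial (RatFunc k) :=
  Polynomial.mapRingHom (algebraMap (Polynomial k) (RatFunc k))

/-- The embedding of `k[y]` into `k[x,y] = (k[x])[y]`. -/
def PY : Polynomial k →+* Polynomial (Polynomial k) :=
  Polynomial.mapRingHom Polynomial.C

/-- The embedding of `k[x,y]` into `k(x,y)`. -/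
def FPP : Polynomial (Polynomial k) →+* F2 k := (FP k).comp (PP k)

/-- The embedding of `k[y]` into `k(x)[y]`. -/
def PYx : Polynomial k →+* Polynomial (RatFunc k) :=
  Polynomial.mapRingHom (algebraMap k (RatFunc k))

variable {k}

/-- `σ` is the shift operator `σ_x : f(x,y) ↦ f(x+1,y)`, i.e. the automorphism of
`k(x,y)` fixing `k(y)` pointwise (equivalently, fixing the generators `k` and `y`)
and sending `x` to `x+1`. -/
def IsShiftX (σ : F2 k ≃+* F2 k) : Prop :=
  (∀ c : k, σ (Fc k c) = Fc k c) ∧ σ (Fy k) = Fy k ∧ σ (Fx k) = Fx k + 1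

/-- `σ` is the `q`-shift operator `τ_{x,q} : f(x,y) ↦ f(qx,y)`, i.e. the automorphism of
`k(x,y)` fixing `k(y)` pointwise and sending `x` to `q·x`. -/
def IsQShiftX (q : k) (σ : F2 k ≃+* F2 k) : Prop :=
  (∀ c : k, σ (Fc k c) = Fc k c) ∧ σ (Fy k) = Fy k ∧ σ (Fx k) = Fc k q * Fx k

/-- `σ` is the shift operator `σ_y : f(x,y) ↦ f(x,y+1)`, i.e. the automorphism of
`k(x,y)` fixing `k(x)` pointwise and sending `y` to `y+1`. -/
def IsShiftY (σ : F2 k ≃+* F2 k) : Prop :=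
  (∀ c : k, σ (Fc k c) = Fc k c) ∧ σ (Fx k) = Fx k ∧ σ (Fy k) = Fy k + 1

/-- `D` is the partial derivation `D_y = ∂/∂y` on `k(x,y)`: the `k(x)`-linear derivation
with `D(y) = 1`. -/
def IsDerivY (D : F2 k → F2 k) : Prop :=
  (∀ a b, D (a + b) = D a + D b) ∧ (∀ a b, D (a * b) = a * D b + D a * b) ∧
  (∀ c : RatFunc k, D (FKx k c) = 0) ∧ D (Fy k) = 1

/-- `q` is not a root of unity. -/
def NotRootOfUnity (q : k) : Prop := ∀ n : ℕ, 0 < n → q ^ n ≠ 1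

section GaussLemma

variable {R K : Type*} [CommRing R] [IsDomain R] [IsGCDMonoid R] [Field K] [Algebra R K]
  [IsFractionRing R K]

theorem exists_isPrimitive_associated_map {p : K[X]} (hp : p ≠ 0) :
    ∃ d : R[X], d.IsPrimitive ∧ Associated (d.map (algebraMap R K)) p := by
  obtain ⟨_⟩ : Nonempty (NormalizedGCDMonoid R) := inferInstance
  set N := IsLocalization.integerNormalization (nonZeroDivisors R) p
  obtain ⟨b, hb, hN⟩ := IsLocalization.integerNormalization_spec (nonZeroDivisors R) p
  have isUnit_C_algebraMap {r : R} (hr : r ≠ 0) : IsUnit (C (algebraMap R K r)) :=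
    isUnit_C.mpr (by simpa using hr)
  have hN0 : N ≠ 0 := mt IsFractionRing.integerNormalization_eq_zero_iff.mp hp
  refine ⟨N.primPart, N.isPrimitive_primPart, ?_⟩
  have hcontent : N.map (algebraMap R K) =
      C (algebraMap R K N.content) * N.primPart.map (algebraMap R K) := by
    conv_lhs => rw [N.eq_C_content_mul_primPart, Polynomial.map_mul, map_C]
  have hclear : N.map (algebraMap R K) = C (algebraMap R K b) * p := by
    rw [hN, Algebra.smul_def, Polynomial.algebraMap_apply]
  have hprimPart : Associated (N.primPart.map (algebraMap R K)) (N.map (algebraMap R K)) :=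
    hcontent ▸ associated_unit_mul_right _ _
      (isUnit_C_algebraMap (mt content_eq_zero_iff.mp hN0))
  have hnormalized : Associated (N.map (algebraMap R K)) p :=
    hclear ▸ associated_unit_mul_left _ _ (isUnit_C_algebraMap (nonZeroDivisors.ne_zero hb))
  exact hprimPart.trans hnormalized

theorem exists_irreducible_associated_map {p : K[X]} (hp : Irreducible p) :
    ∃ d : R[X], Irreducible d ∧ Associated (d.map (algebraMap R K)) p := by
  obtain ⟨d, hprim, hd⟩ := exists_isPrimitive_associated_map (R := R) hp.ne_zero
  exact ⟨d, hprim.irreducible_iff_irreducible_map_fraction_map.mpr (hd.irreducible_iff.mpr hp), hd⟩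

end GaussLemma

section PartialFractions

variable {K F : Type*} [Field K]

theorem exists_C_leadingCoeff_mul_prod_pow_eq (D : K[X]) :
    ∃ (s : Finset K[X]) (n : K[X] → ℕ), (∀ p ∈ s, Irreducible p ∧ p.Monic) ∧
      C D.leadingCoeff * ∏ p ∈ s, p ^ n p = D := by
  classical
  refine ⟨(UniqueFactorizationMonoid.normalizedFactors D).toFinset,
    fun p => (UniqueFactorizationMonoid.normalizedFactors D).count p, fun p hp => ?_, ?_⟩
  · rw [Multiset.mem_toFinset] at hp
    have hirr := UniqueFactorizationMonoid.irreducible_of_normalized_factor p hp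
    exact ⟨hirr, (normalize_eq_self_iff_monic hirr.ne_zero).mp
      (UniqueFactorizationMonoid.normalize_normalized_factor p hp)⟩
  · rw [← Finset.prod_multiset_count, leadingCoeff_mul_prod_normalizedFactors]

variable [Field F] [Algebra K[X] F] [IsFractionRing K[X] F]

theorem exists_eq_add_sum_div_pow (f : F) :
    ∃ (s : Finset K[X]) (n : K[X] → ℕ) (q : K[X]) (r : (p : K[X]) → Fin (n p) → K[X]),
      (∀ p ∈ s, Irreducible p) ∧ (∀ p ∈ s, ∀ j, (r p j).degree < p.degree) ∧
      f = algebraMap K[X] F q +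
        ∑ p ∈ s, ∑ j, algebraMap K[X] F (r p j) / algebraMap K[X] F p ^ (j.1 + 1) := by
  obtain ⟨N, D, hD, rfl⟩ := IsFractionRing.div_surjective (A := K[X]) f
  have hlc : D.leadingCoeff ≠ 0 := leadingCoeff_ne_zero.mpr (nonZeroDivisors.ne_zero hD)
  obtain ⟨s, n, hs, hfactor⟩ := exists_C_leadingCoeff_mul_prod_pow_eq D
  have hcop : Set.Pairwise s fun p r => IsCoprime p r := fun p hp r hr hpr =>
    ((hs p hp).1.isCoprime_or_dvd r).resolve_right fun h =>
      hpr (eq_of_monic_of_associated (hs p hp).2 (hs r hr).2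
        ((hs p hp).1.associated_of_dvd (hs r hr).1 h))
  obtain ⟨q, r, hr, hsum⟩ := mul_prod_pow_inverse_eq_quo_add_sum_rem_mul_pow_inverse
    (K := F) (C D.leadingCoeff⁻¹ * N) (fun p hp => (hs p hp).2) hcop n
    (gi := fun p => (algebraMap K[X] F p)⁻¹)
    fun p hp => inv_mul_cancel₀ (by simpa using (hs p hp).1.ne_zero)
  refine ⟨s, n, q, r, fun p hp => (hs p hp).1, hr, ?_⟩
  have hlead : algebraMap K[X] F (C D.leadingCoeff) ≠ 0 := by simpa using hlc
  have hnum : algebraMap K[X] F N =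
      algebraMap K[X] F (C D.leadingCoeff) * algebraMap K[X] F (C D.leadingCoeff⁻¹ * N) := by
    rw [← map_mul, ← mul_assoc, ← C_mul, mul_inv_cancel₀ hlc, C_1, one_mul]
  have hden : algebraMap K[X] F D =
      algebraMap K[X] F (C D.leadingCoeff) * ∏ p ∈ s, algebraMap K[X] F p ^ n p := by
    simpa only [map_mul, map_prod, map_pow] using congrArg (algebraMap K[X] F) hfactor.symm
  rw [hnum, hden, mul_div_mul_left _ _ hlead]
  simpa only [inv_pow, ← div_eq_mul_inv, Finset.prod_inv_distrib] using hsum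

@[elab_as_elim]
theorem partialFraction_induction {P : F → Prop} (add : ∀ u v, P u → P v → P (u + v))
    (polynomial : ∀ p : K[X], P (algebraMap K[X] F p))
    (simple : ∀ (p a : K[X]) (j : ℕ), Irreducible p → a.degree < p.degree →
      P (algebraMap K[X] F a / algebraMap K[X] F p ^ (j + 1)))
    (f : F) : P f := by
  obtain ⟨s, n, q, r, hirr, hr, rfl⟩ := exists_eq_add_sum_div_pow (K := K) f
  have zero : P 0 := by simpa using polynomial 0
  exact add _ _ (polynomial q) <| Finset.sum_induction _ P add zero fun p hp =>
    Finset.sum_induction _ P add zero fun j _ => simple p (r p j) j (hirr p hp) (hr p hp j)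

end PartialFractions

section Taylor

theorem taylor_one_bernoulli (n : ℕ) :
    taylor 1 (Polynomial.bernoulli (n + 1)) - Polynomial.bernoulli (n + 1) =
      (n + 1 : ℚ) • X ^ n := by
  rw [taylor_apply, C_1, add_comm X, Polynomial.bernoulli_comp_one_add_X, add_sub_cancel_left,
    add_tsub_cancel_right, ← Nat.cast_smul_eq_nsmul ℚ, Nat.cast_succ]

theorem exists_taylor_one_sub_eq {A : Type*} [CommRing A] [Algebra ℚ A] (p : A[X]) :
    ∃ h, taylor 1 h - h = p := by
  induction p using Polynomial.induction_on' with
  | add p₁ p₂ hp₁ hp₂ =>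
    obtain ⟨h₁, rfl⟩ := hp₁
    obtain ⟨h₂, rfl⟩ := hp₂
    exact ⟨h₁ + h₂, by rw [map_add, add_sub_add_comm]⟩
  | monomial n c =>
    let b : ℚ[X] := (n + 1 : ℚ)⁻¹ • Polynomial.bernoulli (n + 1)
    have hb : taylor 1 b - b = X ^ n := by
      rw [map_smul, ← smul_sub, taylor_one_bernoulli, inv_smul_smul₀ n.cast_add_one_ne_zero]
    refine ⟨c • b.map (algebraMap ℚ A), ?_⟩
    have hmap := congrArg (Polynomial.map (algebraMap ℚ A)) hb
    rw [Polynomial.map_sub, map_taylor, map_one, Polynomial.map_pow, map_X] at hmap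
    rw [map_smul, ← smul_sub, hmap, smul_X_eq_monomial]

end Taylor

section RingEquiv

variable {K L : Type*} [Field K] [Field L]

theorem exists_ringEquiv_apply_eq_comp (ψ : K[X] ≃+* L[X]) :
    ∃ φ : K →+* L, ∀ p, ψ p = (p.map φ).comp (ψ X) := by
  let φ : K →+* L := constantCoeff.comp ((ψ : K[X] →+* L[X]).comp C)
  -- the nonzero constants are the units of the polynomial ring
  have hφ (c : K) : ψ (C c) = C (φ c) := by
    refine eq_C_of_natDegree_eq_zero ?_
    obtain rfl | hc := eq_or_ne c 0
    · simp
    · exact natDegree_eq_zero_of_isUnit ((isUnit_C.mpr hc.isUnit).map ψ)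
  have hext : (ψ : K[X] →+* L[X]) = (compRingHom (ψ X)).comp (mapRingHom φ) :=
    Polynomial.ringHom_ext (by simp [hφ]) (by simp)
  exact ⟨φ, fun p => DFunLike.congr_fun hext p⟩

theorem degree_ringEquiv_apply (ψ : K[X] ≃+* L[X]) (p : K[X]) : (ψ p).degree = p.degree := by
  obtain ⟨φ, hφ⟩ := exists_ringEquiv_apply_eq_comp ψ
  have hmul (r : K[X]) : (ψ r).natDegree = r.natDegree * (ψ X).natDegree := by
    rw [hφ r, natDegree_comp, natDegree_map]
  have hX : (ψ X).natDegree = 1 :=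
    Nat.eq_one_of_mul_eq_one_left (by rw [← hmul (ψ.symm X), ψ.apply_symm_apply, natDegree_X])
  obtain rfl | hp := eq_or_ne p 0
  · simp
  · rw [degree_eq_natDegree hp, degree_eq_natDegree (by simpa using hp), hmul, hX, mul_one]

end RingEquiv

theorem zpow_mul_zpow_mem_closure_pair {M : Type*} [Group M] (a b : M) (s t : ℤ) :
    a ^ s * b ^ t ∈ Subgroup.closure {a, b} :=
  mul_mem (zpow_mem (Subgroup.subset_closure (Set.mem_insert a {b})) s)
    (zpow_mem (Subgroup.subset_closure (Set.mem_insert_of_mem a (Set.mem_singleton b))) t)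

section Differences

variable {A : Type*} [Ring A] {τ σ θ : RingAut A}

/-- The additive subgroup `{(τ g - g) + (σ h - h) | g h : A}` of the elements of `A` that are
summable with respect to the automorphisms `τ` and `σ`. -/
def differences (τ σ : RingAut A) : AddSubgroup A :=
  ((τ : A →+ A) - AddMonoidHom.id A).range ⊔ ((σ : A →+ A) - AddMonoidHom.id A).range

theorem mem_differences {u : A} :
    u ∈ differences τ σ ↔ ∃ g h, (τ g - g) + (σ h - h) = u := by
  simp [differences, AddSubgroup.mem_sup]

theorem apply_sub_mem_differences (hθ : θ ∈ Subgroup.closure {τ, σ}) (u : A) :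
    θ u - u ∈ differences τ σ := by
  induction hθ using Subgroup.closure_induction generalizing u with
  | mem θ hθ =>
    obtain rfl | rfl := hθ
    · exact mem_differences.mpr ⟨u, 0, by simp⟩
    · exact mem_differences.mpr ⟨0, u, by simp⟩
  | one => simp
  | mul θ₁ θ₂ _ _ h₁ h₂ =>
    rw [RingAut.mul_apply, ← sub_add_sub_cancel _ (θ₂ u)]
    exact add_mem (h₁ _) (h₂ _)
  | inv θ _ h =>
    have hu := neg_mem (h (θ⁻¹ u))
    rwa [neg_sub, ← RingAut.mul_apply, mul_inv_cancel, RingAut.one_apply] at hu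

end Differences

section PolynomialAut

variable (K F : Type*) [Field K] [Field F] [Algebra K[X] F]

/-- The group of the automorphisms of `F`, to be thought of as `K(y)`, that restrict to
automorphisms of `K[y]` (not necessarily fixing `K`). Such automorphisms take proper fractions to
proper fractions. -/
def polynomialAut : Subgroup (RingAut F) where
  carrier := {θ | ∃ ψ : RingAut K[X], ∀ p, θ (algebraMap K[X] F p) = algebraMap K[X] F (ψ p)}
  one_mem' := ⟨1, fun _ => rfl⟩
  mul_mem' := by
    rintro θ₁ θ₂ ⟨ψ₁, h₁⟩ ⟨ψ₂, h₂⟩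
    exact ⟨ψ₁ * ψ₂, fun p => by simp only [RingAut.mul_apply, h₁, h₂]⟩
  inv_mem' := by
    rintro θ ⟨ψ, h⟩
    refine ⟨ψ⁻¹, fun p => θ.injective ?_⟩
    rw [h]
    simp

end PolynomialAut

section OrbitReduced

universe u

variable (R : Type u) (K F : Type*) [CommRing R] [Field K] [Algebra R K] [Field F]
  [Algebra K[X] F]

/-- The embedding of `R[y]` into `F = K(y)` for `K` the fraction field of `R`; with `R = k[x]` it is
the embedding of `k[x,y]` into `k(x,y)`. -/
def polyEmbedding : R[X] →+* F := (algebraMap K[X] F).comp (mapRingHom (algebraMap R K))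

variable {F}

/-- The rational function `r` is reduced with respect to `G`: it is a sum of proper fractions
`aᵢⱼ / dᵢ ^ (j + 1)` with irreducible `dᵢ ∈ R[y]` in distinct `G`-orbits. Orbits are formed in `F`,
because `G` need not preserve `R[y]`. For `G` generated by `τ_{x,q}` and `σ_y` this is being
`(τ_{x,q}, σ_y)`-reduced. -/
def IsOrbitReduced (G : Subgroup (RingAut F)) (r : F) : Prop :=
  ∃ (n : ℕ) (m : Fin n → ℕ) (a : Fin n → ℕ → K[X]) (d : Fin n → R[X]),
    (∀ i, Irreducible (d i)) ∧
    (∀ i j, j < m i → (a i j).degree < (d i).degree) ∧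
    (∀ i i', ∀ θ ∈ G, polyEmbedding R K F (d i) = θ (polyEmbedding R K F (d i')) → i = i') ∧
    r = ∑ i, ∑ j ∈ Finset.range (m i),
      algebraMap K[X] F (a i j) / polyEmbedding R K F (d i) ^ (j + 1)

variable {R K} {G : Subgroup (RingAut F)} {N : AddSubgroup F}

variable (R K G) in
theorem exists_orbit_representatives :
    ∃ (ι : Type u) (d : ι → R[X]), (∀ c, Irreducible (d c)) ∧
      (∀ c c', ∀ θ ∈ G, polyEmbedding R K F (d c) = θ (polyEmbedding R K F (d c')) → c = c') ∧
      ∀ e, Irreducible e →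
        ∃ c, ∃ θ ∈ G, polyEmbedding R K F e = θ (polyEmbedding R K F (d c)) := by
  let S : Setoid {d : R[X] // Irreducible d} :=
    (MulAction.orbitRel G F).comap fun d => polyEmbedding R K F d
  refine ⟨Quotient S, fun c => (Quotient.out c).1, fun c => (Quotient.out c).2,
    fun c c' θ hθ h => ?_, fun e he => ?_⟩
  · exact Quotient.out_equiv_out.mp ⟨⟨θ, hθ⟩, h.symm⟩
  · obtain ⟨θ, h⟩ := S.symm (Quotient.mk_out (⟨e, he⟩ : {d : R[X] // Irreducible d}))
    exact ⟨_, θ, θ.2, h.symm⟩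

theorem isOrbitReduced_finsuppSum {ι : Type*} {d : ι → R[X]} (hd : ∀ c, Irreducible (d c))
    (horb : ∀ c c', ∀ θ ∈ G,
      polyEmbedding R K F (d c) = θ (polyEmbedding R K F (d c')) → c = c')
    (A : ι × ℕ →₀ K[X]) (hA : ∀ c j, (A (c, j)).degree < (d c).degree) :
    IsOrbitReduced R K G
      (A.sum fun p a => algebraMap K[X] F a / polyEmbedding R K F (d p.1) ^ (p.2 + 1)) := by
  classical
  let T := A.support.image Prod.fst
  let M := (A.support.image Prod.snd).sup id + 1
  let e := T.equivFin.symm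
  have hsupp : A.support ⊆ T ×ˢ Finset.range M := fun p hp =>
    Finset.mem_product.mpr ⟨Finset.mem_image_of_mem _ hp, Finset.mem_range_succ_iff.mpr
      (Finset.le_sup (f := id) (Finset.mem_image_of_mem _ hp))⟩
  refine ⟨T.card, fun _ => M, fun i j => A (e i, j), fun i => d (e i), fun i => hd _,
    fun i j _ => hA _ j, fun i i' θ hθ h => e.injective (Subtype.ext (horb _ _ θ hθ h)), ?_⟩
  rw [Finsupp.sum_of_support_subset A hsupp _ (by simp), Finset.sum_product,
    ← Finset.sum_coe_sort T, ← e.sum_comp]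

theorem exists_div_pow_eq_of_associated {p r : K[X]} (h : Associated p r) (a : K[X]) (j : ℕ) :
    ∃ b : K[X], b.degree = a.degree ∧
      algebraMap K[X] F a / algebraMap K[X] F p ^ j =
        algebraMap K[X] F b / algebraMap K[X] F r ^ j := by
  obtain ⟨u, rfl⟩ := h
  refine ⟨a * u ^ j, degree_eq_degree_of_associated
    (associated_mul_unit_left a _ (u.isUnit.pow j)), ?_⟩
  have hu : algebraMap K[X] F u ≠ 0 := (u.isUnit.map _).ne_zero
  rw [map_mul, map_mul, map_pow, mul_pow, mul_div_mul_right _ _ (pow_ne_zero j hu)]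

variable [IsFractionRing K[X] F]

theorem exists_div_pow_sub_mem (hG : G ≤ polynomialAut K F) (hN : ∀ θ ∈ G, ∀ u, θ u - u ∈ N)
    {θ : RingAut F} (hθ : θ ∈ G) {p r : K[X]}
    (hpr : algebraMap K[X] F p = θ (algebraMap K[X] F r))
    {a : K[X]} (ha : a.degree < p.degree) (j : ℕ) :
    ∃ b : K[X], b.degree < r.degree ∧
      algebraMap K[X] F a / algebraMap K[X] F p ^ j -
        algebraMap K[X] F b / algebraMap K[X] F r ^ j ∈ N := by
  obtain ⟨ψ, hψ⟩ := hG hθ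
  have hp : p = ψ r := IsFractionRing.injective K[X] F (hpr.trans (hψ r))
  obtain ⟨b, rfl⟩ := ψ.surjective a
  refine ⟨b, ?_, ?_⟩
  · rwa [hp, degree_ringEquiv_apply, degree_ringEquiv_apply] at ha
  · have hfrac : algebraMap K[X] F (ψ b) / algebraMap K[X] F p ^ j =
        θ (algebraMap K[X] F b / algebraMap K[X] F r ^ j) := by
      rw [map_div₀, map_pow, hψ b, hpr]
    rw [hfrac]
    exact hN θ hθ _

variable (R) [IsDomain R] [IsGCDMonoid R] [IsFractionRing R K]

@[elab_as_elim]
theorem partialFraction_induction_fractionRing {P : F → Prop}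
    (add : ∀ u v, P u → P v → P (u + v)) (polynomial : ∀ p : K[X], P (algebraMap K[X] F p))
    (simple : ∀ (d : R[X]) (a : K[X]) (j : ℕ), Irreducible d → a.degree < d.degree →
      P (algebraMap K[X] F a / polyEmbedding R K F d ^ (j + 1)))
    (f : F) : P f := by
  refine partialFraction_induction add polynomial (fun p a j hp ha => ?_) f
  obtain ⟨d, hd, hdp⟩ := exists_irreducible_associated_map (R := R) hp
  obtain ⟨b, hb, hab⟩ := exists_div_pow_eq_of_associated (F := F) hdp.symm a (j + 1)
  rw [hab]
  refine simple d b j hd ?_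
  rwa [hb, ← degree_map_eq_of_injective (IsFractionRing.injective R K),
    degree_eq_degree_of_associated hdp]

theorem exists_finsupp_sub_sum_mem (hG : G ≤ polynomialAut K F)
    (hN : ∀ θ ∈ G, ∀ u, θ u - u ∈ N) (hpoly : ∀ p : K[X], algebraMap K[X] F p ∈ N)
    {ι : Type*} {d : ι → R[X]} (hd : ∀ c, Irreducible (d c))
    (hrep : ∀ e, Irreducible e →
      ∃ c, ∃ θ ∈ G, polyEmbedding R K F e = θ (polyEmbedding R K F (d c)))
    (f : F) :
    ∃ A : ι × ℕ →₀ K[X], (∀ c j, (A (c, j)).degree < (d c).degree) ∧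
      f - (A.sum fun p a => algebraMap K[X] F a / polyEmbedding R K F (d p.1) ^ (p.2 + 1)) ∈ N := by
  classical
  have hzero (c) : (0 : K[X]).degree < (d c).degree := by
    rw [degree_zero, bot_lt_iff_ne_bot, Ne, degree_eq_bot]
    exact (hd c).ne_zero
  refine partialFraction_induction_fractionRing R (K := K) ?_ (fun p => ?_)
    (fun e a j he ha => ?_) f
  · rintro u v ⟨A, hA, hAu⟩ ⟨B, hB, hBv⟩
    refine ⟨A + B, fun c j => (degree_add_le _ _).trans_lt (max_lt (hA c j) (hB c j)), ?_⟩
    rw [Finsupp.sum_add_index' (by simp) (by simp [add_div]), add_sub_add_comm]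
    exact add_mem hAu hBv
  · exact ⟨0, fun c _ => hzero c, by simpa using hpoly p⟩
  · obtain ⟨c, θ, hθ, heθ⟩ := hrep e he
    rw [← degree_map_eq_of_injective (IsFractionRing.injective R K)] at ha
    obtain ⟨b, hb, hab⟩ := exists_div_pow_sub_mem hG hN hθ heθ ha (j + 1)
    rw [coe_mapRingHom, degree_map_eq_of_injective (IsFractionRing.injective R K)] at hb
    refine ⟨Finsupp.single (c, j) b, fun c' j' => ?_, ?_⟩
    · rw [Finsupp.single_apply]
      split_ifs with h
      · obtain ⟨rfl, rfl⟩ := Prod.mk.inj h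
        exact hb
      · exact hzero c'
    · rwa [Finsupp.sum_single_index (by simp)]

theorem exists_isOrbitReduced_sub_mem (hG : G ≤ polynomialAut K F)
    (hN : ∀ θ ∈ G, ∀ u, θ u - u ∈ N) (hpoly : ∀ p : K[X], algebraMap K[X] F p ∈ N) (f : F) :
    ∃ r, IsOrbitReduced R K G r ∧ f - r ∈ N := by
  obtain ⟨ι, d, hd, horb, hrep⟩ := exists_orbit_representatives R K G
  obtain ⟨A, hA, hfA⟩ := exists_finsupp_sub_sum_mem R hG hN hpoly hd hrep f
  exact ⟨_, isOrbitReduced_finsuppSum hd horb A hA, hfA⟩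

end OrbitReduced

theorem stmt5_general (R : Type*) {K F : Type*} [CommRing R] [IsDomain R] [IsGCDMonoid R]
    [Field K] [CharZero K] [Algebra R K] [IsFractionRing R K]
    [Field F] [Algebra K[X] F] [IsFractionRing K[X] F]
    {τ σ : RingAut F} (hτ : τ ∈ polynomialAut K F)
    (hσ : ∀ p : K[X], σ (algebraMap K[X] F p) = algebraMap K[X] F (taylor 1 p)) (f : F) :
    ∃ g h r, IsOrbitReduced R K (Subgroup.closure {τ, σ}) r ∧
      f = (τ g - g) + (σ h - h) + r := by
  have hσ' : σ ∈ polynomialAut K F := ⟨(taylorEquiv (1 : K)).toRingEquiv, hσ⟩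
  have hG : Subgroup.closure {τ, σ} ≤ polynomialAut K F :=
    (Subgroup.closure_le _).mpr (Set.pair_subset hτ hσ')
  have hpoly (p : K[X]) : algebraMap K[X] F p ∈ differences τ σ := by
    obtain ⟨h, rfl⟩ := exists_taylor_one_sub_eq p
    exact mem_differences.mpr ⟨0, algebraMap K[X] F h, by simp [hσ]⟩
  obtain ⟨r, hr, hfr⟩ := exists_isOrbitReduced_sub_mem R hG
    (fun _ => apply_sub_mem_differences) hpoly f
  obtain ⟨g, h, hgh⟩ := mem_differences.mp hfr
  exact ⟨g, h, r, hr, by rw [hgh, sub_add_cancel]⟩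

section RatFunc

variable {k : Type*} [Field k]

theorem polynomialRatFunc_ringHom_ext {L : Type*} [Semiring L] {f g : (RatFunc k)[X] →+* L}
    (hC : ∀ c : k, f (C (RatFunc.C c)) = g (C (RatFunc.C c)))
    (hx : f (C RatFunc.X) = g (C RatFunc.X)) (hy : f X = g X) : f = g := by
  refine Polynomial.ringHom_ext' (IsLocalization.ringHom_ext (nonZeroDivisors k[X])
    (Polynomial.ringHom_ext (fun c => ?_) ?_)) hy
  · simpa using hC c
  · simpa using hx

theorem IsShiftY.apply_FP {σ : F2 k ≃+* F2 k} (hσ : IsShiftY σ) (p : (RatFunc k)[X]) :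
    σ (FP k p) = FP k (taylor 1 p) := by
  obtain ⟨hc, hx, hy⟩ := hσ
  refine DFunLike.congr_fun (f := (σ : F2 k →+* F2 k).comp (FP k))
    (g := (FP k).comp (taylorAlgHom (1 : RatFunc k) : (RatFunc k)[X] →+* (RatFunc k)[X]))
    (polynomialRatFunc_ringHom_ext (fun c => ?_) ?_ ?_) p
  · simpa [FP, Fc] using hc c
  · simpa [FP, Fx] using hx
  · simpa [FP, Fy] using hy

theorem IsQShiftX.mem_polynomialAut {q : k} (hq : q ≠ 0) {τ : F2 k ≃+* F2 k}
    (hτ : IsQShiftX q τ) : τ ∈ polynomialAut (RatFunc k) (F2 k) := by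
  obtain ⟨hc, hy, hx⟩ := hτ
  let _ := invertibleOfNonzero hq
  let φ : RatFunc k ≃+* RatFunc k :=
    IsFractionRing.ringEquivOfRingEquiv (algEquivCMulXAddC q 0).toRingEquiv
  have hφ (p : k[X]) : φ (algebraMap k[X] (RatFunc k) p) =
      algebraMap k[X] (RatFunc k) (algEquivCMulXAddC q 0 p) :=
    IsFractionRing.ringEquivOfRingEquiv_algebraMap _ p
  have hφC (c : k) : φ (RatFunc.C c) = RatFunc.C c := by simpa using hφ (C c)
  have hφX : φ RatFunc.X = RatFunc.C q * RatFunc.X := by simpa using hφ X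
  refine ⟨Polynomial.mapEquiv φ, DFunLike.congr_fun
    (f := (τ : F2 k →+* F2 k).comp (FP k))
    (g := (FP k).comp (Polynomial.mapEquiv φ : (RatFunc k)[X] →+* (RatFunc k)[X]))
    (polynomialRatFunc_ringHom_ext (fun c => ?_) ?_ ?_)⟩
  · simpa [FP, Fc, hφC] using hc c
  · simpa [FP, Fx, Fc, hφX] using hx
  · simpa [FP, Fy] using hy

end RatFunc

/-- for `q ∈ k \ {0}` not a root of unity, every `f ∈ k(x,y)` admits a
`(τ_{x,q}, σ_y)`-reduced form
`f = Δ_{x,q}(g) + Δ_y(h) + Σᵢ Σⱼ a_{i,j}/dᵢ^j` with `a_{i,j} ∈ k(x)[y]`, `dᵢ ∈ k[x,y]`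
irreducible in pairwise distinct `(τ_{x,q}, σ_y)`-orbits, and `deg_y(a_{i,j}) < deg_y(dᵢ)`. -/
theorem stmt5 {k : Type*} [Field k] [CharZero k]
    (q : k) (hq : q ≠ 0) (hqru : NotRootOfUnity q)
    (τ : F2 k ≃+* F2 k) (hτ : IsQShiftX q τ)
    (σy : F2 k ≃+* F2 k) (hσy : IsShiftY σy)
    (f : F2 k) :
    ∃ (g h : F2 k) (n : ℕ) (m : Fin n → ℕ)
      (a : Fin n → ℕ → Polynomial (RatFunc k))
      (dd : Fin n → Polynomial (Polynomial k)),
      (∀ i, Irreducible (dd i)) ∧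
      (∀ i j, j < m i → (a i j).degree < (dd i).degree) ∧
      (∀ i i' : Fin n, ∀ s t : ℤ,
        FPP k (dd i) = (τ ^ s) ((σy ^ t) (FPP k (dd i'))) → i = i') ∧
      f = (τ g - g) + (σy h - h) +
        ∑ i, ∑ j ∈ Finset.range (m i), FP k (a i j) / FPP k (dd i) ^ (j + 1) := by
  obtain ⟨g, h, _, ⟨n, m, a, d, hd, ha, horb, rfl⟩, hf⟩ :=
    stmt5_general k[X] (hτ.mem_polynomialAut hq) hσy.apply_FP f
  exact ⟨g, h, n, m, a, d, hd, ha, fun i i' s t =>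
    horb i i' _ (zpow_mul_zpow_mem_closure_pair τ σy s t), hf⟩
end
end

section
/- Let q ∈ k satisfy q^m = 1 with m minimal, and assume k contains all m-th roots of unity. Let f ∈ k(x,y) and suppose f = τ_{x,q}(g) − g + c with g ∈ k(x,y) and c ∈ k(y)(x^m). Then f is exact with respect to (τ_{x,q}, σ_y), i.e., f = Δ_{x,q}(u) + Δ_y(v) for some u, v ∈ k(x,y), if and only if c = Δ_y(d) for some d ∈ k(y)(x^m). -/
/-! Let `K = k(y)(x^m)`. As `x` is algebraic over `K`, the powers `1, x, …, x^(d-1)` form a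
basis of `k(x,y) = K(x)` for some `d`. The `K`-linear operator `τ` multiplies `x^i` by `q^i`, while
`Δ_y` acts on the coefficients with respect to this basis. Hence taking the coefficient of `x^0`
annihilates every `τ u - u`, commutes with `Δ_y`, and is the identity on `K`: applied to
`τ g - g + c = τ u - u + Δ_y v` it gives `c = Δ_y d`, where `d` is the coefficient of `x^0`
in `v`. -/

open Polynomial

noncomputable section

variable (k : Type*) [Field k] [CharZero k]

variable {k}

variable (k) in
/-- The subfield `k(y)(x^m)` of `k(x,y)`, generated over `k` by `y` and `x^m`. -/
def kyxm (m : ℕ) : IntermediateField k (F2 k) :=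
  IntermediateField.adjoin k {Fy k, (Fx k) ^ m}

section PowerBasis

variable {R S : Type*} [CommRing R] [CommRing S] [Nontrivial S] [Algebra R S]

/-- The coefficient of `1` in the expansion of an element of `S` in the power basis `pb`. It is the
projection `S → R` that annihilates the other powers of `pb.gen`. -/
def constCoeff (pb : PowerBasis R S) : S →ₗ[R] R := pb.basis.coord ⟨0, pb.dim_pos⟩

lemma constCoeff_one (pb : PowerBasis R S) : constCoeff pb 1 = 1 := by
  have h : pb.basis ⟨0, pb.dim_pos⟩ = 1 := by simp only [pb.basis_eq_pow, pow_zero]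
  rw [constCoeff, ← h, Module.Basis.coord_apply, Module.Basis.repr_self, Finsupp.single_eq_same]

lemma constCoeff_algebraMap (pb : PowerBasis R S) (c : R) :
    constCoeff pb (algebraMap R S c) = c := by
  rw [Algebra.algebraMap_eq_smul_one, map_smul, constCoeff_one, smul_eq_mul, mul_one]

lemma constCoeff_gen_pow (pb : PowerBasis R S) {i : ℕ} (hi : i < pb.dim) (h0 : i ≠ 0) :
    constCoeff pb (pb.gen ^ i) = 0 := by
  rw [← Fin.val_mk hi, ← pb.basis_eq_pow, constCoeff, Module.Basis.coord_apply,
    Module.Basis.repr_self, Finsupp.single_eq_of_ne]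
  exact fun h => h0 (congrArg Fin.val h).symm

lemma constCoeff_algHom_apply (pb : PowerBasis R S) (τ : S →ₐ[R] S) {a : R}
    (hτ : τ pb.gen = a • pb.gen) (z : S) : constCoeff pb (τ z) = constCoeff pb z := by
  suffices h : constCoeff pb ∘ₗ τ.toLinearMap = constCoeff pb from LinearMap.congr_fun h z
  refine pb.basis.ext fun i => ?_
  rw [LinearMap.comp_apply, AlgHom.toLinearMap_apply, pb.basis_eq_pow, map_pow, hτ, _root_.smul_pow,
    map_smul]
  rcases eq_or_ne (i : ℕ) 0 with h0 | h0
  · rw [h0, pow_zero, one_smul]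
  · rw [constCoeff_gen_pow pb i.2 h0, smul_zero]

lemma algebraMap_constCoeff_addMonoidHom_apply (pb : PowerBasis R S) {δ : S →+ S}
    (hgen : ∀ z, δ (pb.gen * z) = pb.gen * δ z)
    (hR : ∀ a : R, δ (algebraMap R S a) ∈ (algebraMap R S).range) (v : S) :
    algebraMap R S (constCoeff pb (δ v)) = δ (algebraMap R S (constCoeff pb v)) := by
  choose δ₀ hδ₀ using hR
  have hpow (i : ℕ) (z : S) : δ (pb.gen ^ i * z) = pb.gen ^ i * δ z := by
    have hcomm : Function.Commute δ (pb.gen * ·) := hgen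
    simpa only [mul_left_iterate] using hcomm.iterate_right i z
  have hmonomial (i : Fin pb.dim) (a : R) : δ (a • pb.basis i) = δ₀ a • pb.basis i := by
    rw [pb.basis_eq_pow, Algebra.smul_def, mul_comm, hpow, ← hδ₀, mul_comm, ← Algebra.smul_def]
  have hexpand : δ v = ∑ i, δ₀ (pb.basis.repr v i) • pb.basis i := by
    rw [← Finset.sum_congr rfl fun i _ => hmonomial i _, ← map_sum, pb.basis.sum_repr]
  rw [← hδ₀, constCoeff, Module.Basis.coord_apply, hexpand, pb.basis.repr_sum_self,
    Module.Basis.coord_apply]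

theorem exists_eq_sub_add_iff_exists_algebraMap_eq (pb : PowerBasis R S) (τ : S →ₐ[R] S)
    {a : R} (hτ : τ pb.gen = a • pb.gen) {δ : S →+ S}
    (hgen : ∀ z, δ (pb.gen * z) = pb.gen * δ z)
    (hR : ∀ a : R, δ (algebraMap R S a) ∈ (algebraMap R S).range) {f g : S} {c : R}
    (hf : f = τ g - g + algebraMap R S c) :
    (∃ u v, f = (τ u - u) + δ v) ↔ ∃ d : R, algebraMap R S c = δ (algebraMap R S d) := by
  constructor
  · rintro ⟨u, v, huv⟩
    refine ⟨constCoeff pb v, ?_⟩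
    have h : constCoeff pb (τ g - g + algebraMap R S c) = constCoeff pb (τ u - u + δ v) := by
      rw [← hf, huv]
    simp only [map_add, map_sub, constCoeff_algHom_apply pb τ hτ, sub_self, zero_add,
      constCoeff_algebraMap] at h
    rw [h, algebraMap_constCoeff_addMonoidHom_apply pb hgen hR]
  · rintro ⟨d, hd⟩
    exact ⟨g, algebraMap R S d, by rw [hf, hd]⟩

end PowerBasis

section RationalFunctions

open IntermediateField

variable {k : Type*} [Field k] {q : k} {m : ℕ} {τ σ : F2 k ≃+* F2 k}

lemma algebraMap_eq_Fc (a : k) : algebraMap k (F2 k) a = Fc k a := by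
  rw [IsScalarTower.algebraMap_apply k (RatFunc k) (F2 k), RatFunc.algebraMap_eq_C,
    RatFunc.algebraMap_eq_C, Fc, RingHom.comp_apply]

lemma adjoin_Fx_Fy : adjoin k {Fx k, Fy k} = ⊤ := by
  set L := adjoin k {Fx k, Fy k}
  let ι := IsScalarTower.toAlgHom k (RatFunc k) (F2 k)
  have hx (r : RatFunc k) : algebraMap (RatFunc k) (F2 k) r ∈ L := by
    have h : (⊤ : IntermediateField k (RatFunc k)) ≤ L.comap ι := by
      rw [← RatFunc.adjoin_X, adjoin_simple_le_iff]
      exact subset_adjoin k _ (.inl rfl)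
    exact h (mem_top (x := r))
  let L' : IntermediateField (RatFunc k) (F2 k) := { L with algebraMap_mem' := hx }
  have hL' : L' = ⊤ := by
    rw [← top_le_iff, ← RatFunc.adjoin_X, adjoin_simple_le_iff]
    exact subset_adjoin k _ (.inr rfl)
  exact restrictScalars_eq_top_iff.mpr hL'

lemma Fy_mem_kyxm : Fy k ∈ kyxm k m := subset_adjoin k _ (.inl rfl)

lemma Fx_pow_mem_kyxm : Fx k ^ m ∈ kyxm k m := subset_adjoin k _ (.inr rfl)

lemma isIntegral_Fx (hm : 0 < m) : IsIntegral (kyxm k m) (Fx k) :=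
  .of_pow hm (isIntegral_algebraMap (R := kyxm k m) (x := ⟨Fx k ^ m, Fx_pow_mem_kyxm⟩))

lemma adjoin_kyxm_Fx (k : Type*) [Field k] (m : ℕ) : (kyxm k m)⟮Fx k⟯ = ⊤ := by
  rw [← restrictScalars_eq_top_iff (K := k), restrictScalars_adjoin, ← top_le_iff, ← adjoin_Fx_Fy]
  exact adjoin.mono k _ _ (Set.pair_subset (.inr rfl) (.inl Fy_mem_kyxm))

/-- The basis of `k(x,y)` over `k(y)(x^m)` formed by powers of `x`. -/
def powerBasisFx (k : Type*) [Field k] {m : ℕ} (hm : 0 < m) : PowerBasis (kyxm k m) (F2 k) :=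
  (adjoin.powerBasis (isIntegral_Fx (k := k) hm)).map
    ((equivOfEq (adjoin_kyxm_Fx k m)).trans topEquiv)

lemma powerBasisFx_gen (hm : 0 < m) : (powerBasisFx k hm).gen = Fx k := rfl

lemma IsQShiftX.apply_eq_self_of_mem_kyxm (hτ : IsQShiftX q τ) (hq : q ^ m = 1) {c : F2 k}
    (hc : c ∈ kyxm k m) : τ c = c := by
  induction hc using adjoin_induction with
  | mem z hz =>
    rcases hz with rfl | rfl
    · exact hτ.2.1
    · rw [map_pow, hτ.2.2, mul_pow, ← map_pow, hq, map_one, one_mul]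
  | algebraMap a => rw [algebraMap_eq_Fc, hτ.1]
  | add _ _ _ _ hz hw => rw [map_add, hz, hw]
  | inv _ _ hz => rw [map_inv₀, hz]
  | mul _ _ _ _ hz hw => rw [map_mul, hz, hw]

lemma IsShiftY.apply_mem_kyxm (hσ : IsShiftY σ) {c : F2 k} (hc : c ∈ kyxm k m) :
    σ c ∈ kyxm k m := by
  let φ : F2 k →ₐ[k] F2 k :=
    { (σ : F2 k →+* F2 k) with commutes' := fun a => by simp [algebraMap_eq_Fc, hσ.1] }
  suffices h : kyxm k m ≤ (kyxm k m).comap φ from h hc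
  refine adjoin_le_iff.mpr (Set.pair_subset ?_ ?_)
  · change σ (Fy k) ∈ kyxm k m
    rw [hσ.2.2]
    exact add_mem Fy_mem_kyxm (one_mem _)
  · change σ (Fx k ^ m) ∈ kyxm k m
    rw [map_pow, hσ.2.1]
    exact Fx_pow_mem_kyxm

end RationalFunctions

/-- Besides `Δ_y`, the operator `δ` may be `∂/∂y` or the difference operator of a
`q`-shift in `y`. -/
theorem stmt10_general {k : Type*} [Field k] (q : k) (m : ℕ) (hm : 0 < m) (hq : q ^ m = 1)
    (τ : F2 k ≃+* F2 k) (hτ : IsQShiftX q τ)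
    (δ : F2 k →+ F2 k) (hδx : ∀ z, δ (Fx k * z) = Fx k * δ z)
    (hδ : ∀ a ∈ kyxm k m, δ a ∈ kyxm k m)
    (f g c : F2 k) (hc : c ∈ kyxm k m) (hf : f = τ g - g + c) :
    (∃ u v : F2 k, f = (τ u - u) + δ v) ↔ (∃ d : F2 k, d ∈ kyxm k m ∧ c = δ d) := by
  let τK : F2 k →ₐ[kyxm k m] F2 k :=
    { (τ : F2 k →+* F2 k) with commutes' := fun a => hτ.apply_eq_self_of_mem_kyxm hq a.2 }
  have hτx : τK (powerBasisFx k hm).gen =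
      algebraMap k (kyxm k m) q • (powerBasisFx k hm).gen := by
    rw [powerBasisFx_gen, algebraMap_smul, Algebra.smul_def, algebraMap_eq_Fc]
    exact hτ.2.2
  have hδK (a : kyxm k m) : δ a ∈ (algebraMap (kyxm k m) (F2 k)).range := ⟨⟨δ a, hδ a a.2⟩, rfl⟩
  have h := exists_eq_sub_add_iff_exists_algebraMap_eq (c := ⟨c, hc⟩) (powerBasisFx k hm) τK hτx
    hδx hδK hf
  exact h.trans (Subtype.exists.trans <| by
    simp only [IntermediateField.algebraMap_apply, exists_prop])

/-- Theorem 1, case `∂_y = Δ_y`: let `q ∈ k` satisfy `q^m = 1` with `m`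
minimal, and assume `k` contains all `m`-th roots of unity. Let `f ∈ k(x,y)` with
`f = τ_{x,q}(g) - g + c`, `c ∈ k(y)(x^m)`. Then `f` is exact with respect to
`(τ_{x,q}, σ_y)`, i.e. `f = Δ_{x,q}(u) + Δ_y(v)` for some `u, v ∈ k(x,y)`, iff
`c = Δ_y(d)` for some `d ∈ k(y)(x^m)`. -/
theorem stmt10 {k : Type*} [Field k] [CharZero k]
    (q : k) (m : ℕ) (hm : 0 < m) (hq : q ^ m = 1)
    (hmin : ∀ n : ℕ, 0 < n → q ^ n = 1 → m ≤ n)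
    (hall : Multiset.card ((X ^ m - C 1 : Polynomial k).roots) = m)
    (τ : F2 k ≃+* F2 k) (hτ : IsQShiftX q τ)
    (σy : F2 k ≃+* F2 k) (hσy : IsShiftY σy)
    (f g c : F2 k) (hc : c ∈ kyxm k m) (hf : f = τ g - g + c) :
    (∃ u v : F2 k, f = (τ u - u) + (σy v - v)) ↔
    (∃ d : F2 k, d ∈ kyxm k m ∧ c = σy d - d) := by
  exact stmt10_general q m hm hq τ hτ ((σy : F2 k →+ F2 k) - AddMonoidHom.id _)
    (fun z => by simp [hσy.2.1, mul_sub]) (fun _ ha => sub_mem (hσy.apply_mem_kyxm ha) ha)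
    f g c hc hf
end
end

section
/- Let q ∈ k \ {0} be not a root of unity. Let f = a/d^m where m ∈ ℕ, m ≥ 1, d ∈ k[x,y] is irreducible, and a ∈ k(x)[y] is nonzero with deg_y(a) < deg_y(d). Then f is exact with respect to (Δ_{x,q}, Δ_y), i.e., f = Δ_{x,q}(g) + Δ_y(h) for some g, h ∈ k(x,y), if and only if d ∈ k[y] and a = Δ_{x,q}(b) for some b ∈ k(x)[y]. -/
/-!
Let `G` be a group of automorphisms of a unique factorization domain `R`, and let `p` be a prime of
`R` whose translates under `G` are pairwise non-associated. Write `F` for the fraction field of `R`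
and `O` for the local ring at `p`. A given `f : F` has a pole at only finitely many translates of
`p`, so the orbit sum `∑_γ [γ⁻¹ f]` in `F / O` is finite. It vanishes on every `γ g - g`, while on
`a / p ^ m` it is just the class of `a / p ^ m`.

Take `R = k(x)[y]` and `p = d`. Comparing the two leading coefficients with respect to `y` in
`d(u x, y + j) = c d(x, y)` gives `j = 0`, and moreover `d ∈ k[y]` if `u` is not a root of unity.

* If `d ∉ k[y]`, the group generated by `τ_{x,q}` and `σ_y` thus satisfies the condition on
  translates, and the orbit sum of an exact `a / d ^ m` is zero. Hence `d ∣ a`, which contradicts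
  `deg a < deg d`.
* If `d ∈ k[y]`, the condition holds for the powers of `σ_y`, whose orbit sum commutes with
  `τ_{x,q}`. So `a / d ^ m ≡ τ B - B` modulo `O` for some `B`, and since `τ` fixes `d`, comparing
  the coefficients of `d ^ (-m)` in the `d`-adic expansions gives `a = τ b - b`.
-/

open Polynomial

noncomputable section

variable (k : Type*) [Field k] [CharZero k]

variable {k}

lemma isOfFinOrder_of_zpow {G : Type*} [Group G] {x : G} {i : ℤ} (hi : i ≠ 0)
    (h : IsOfFinOrder (x ^ i)) : IsOfFinOrder x := by
  obtain ⟨n, hn, hx⟩ := isOfFinOrder_iff_zpow_eq_one.1 h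
  exact isOfFinOrder_iff_zpow_eq_one.2 ⟨i * n, mul_ne_zero hi hn, by rw [zpow_mul, hx]⟩

section OrbitSum

variable {G M : Type*} [Group G] [AddCommGroup M] [DistribMulAction G M] {N : AddSubgroup M}

lemma finite_support_mk_inv_smul {f : M} (hf : {γ : G | γ⁻¹ • f ∉ N}.Finite) :
    (Function.support fun γ : G ↦ ((γ⁻¹ • f : M) : M ⧸ N)).Finite :=
  hf.subset fun _ hγ hmem ↦ hγ ((QuotientAddGroup.eq_zero_iff _).2 hmem)

/-- The orbit sum of `f : M` modulo a subgroup `N`: the sum over `γ : G` of the classes of `γ⁻¹ • f`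
in `M ⧸ N`, only finitely many of which are nonzero. It is invariant under `G`, and so annihilates
every `γ • g - g`. -/
def orbitSum (hN : ∀ f : M, {γ : G | γ⁻¹ • f ∉ N}.Finite) : M →+ M ⧸ N where
  toFun f := ∑ᶠ γ : G, ((γ⁻¹ • f : M) : M ⧸ N)
  map_zero' := by simp
  map_add' f g := by
    simp only [smul_add, QuotientAddGroup.mk_add]
    exact finsum_add_distrib (finite_support_mk_inv_smul (hN f)) (finite_support_mk_inv_smul (hN g))

variable (hN : ∀ f : M, {γ : G | γ⁻¹ • f ∉ N}.Finite)

lemma orbitSum_apply (f : M) : orbitSum hN f = ∑ᶠ γ : G, ((γ⁻¹ • f : M) : M ⧸ N) := rfl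

lemma orbitSum_smul (γ : G) (f : M) : orbitSum hN (γ • f) = orbitSum hN f := by
  rw [orbitSum_apply, orbitSum_apply, ← finsum_comp_equiv (Equiv.mulLeft γ)]
  simp only [Equiv.coe_mulLeft, mul_inv_rev, mul_smul, inv_smul_smul]

lemma orbitSum_map (t : M →+ M) (htN : N ≤ N.comap t) (ht : ∀ (γ : G) (f : M), t (γ • f) = γ • t f)
    (f : M) : orbitSum hN (t f) = QuotientAddGroup.map N N t htN (orbitSum hN f) := by
  rw [orbitSum_apply, orbitSum_apply,
    AddMonoidHom.map_finsum _ (finite_support_mk_inv_smul (hN f))]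
  simp only [QuotientAddGroup.map_mk, ht]

lemma orbitSum_eq_mk {f : M} (hf : ∀ γ : G, γ ≠ 1 → γ • f ∈ N) : orbitSum hN f = (f : M ⧸ N) := by
  rw [orbitSum_apply, finsum_eq_single _ 1, inv_one, one_smul]
  exact fun γ hγ ↦ (QuotientAddGroup.eq_zero_iff _).2 (hf _ (inv_ne_one.2 hγ))

include hN

lemma mem_of_eq_smul_sub_add_smul_sub {f g h : M} {τ σ : G} (hf : ∀ γ : G, γ ≠ 1 → γ • f ∈ N)
    (hfgh : f = (τ • g - g) + (σ • h - h)) : f ∈ N := by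
  rw [← QuotientAddGroup.eq_zero_iff, ← orbitSum_eq_mk hN hf, hfgh]
  simp only [map_add, map_sub, orbitSum_smul, sub_self, add_zero]

lemma exists_sub_map_sub_mem {t : M →+ M} (htN : N ≤ N.comap t)
    (ht : ∀ (γ : G) (f : M), t (γ • f) = γ • t f) {f g h : M} {σ : G}
    (hf : ∀ γ : G, γ ≠ 1 → γ • f ∈ N) (hfgh : f = (t g - g) + (σ • h - h)) :
    ∃ B : M, f - (t B - B) ∈ N := by
  obtain ⟨B, hB⟩ := QuotientAddGroup.mk_surjective (orbitSum hN g)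
  have hmk : (f : M ⧸ N) = ((t B - B : M) : M ⧸ N) := by
    rw [← orbitSum_eq_mk hN hf, hfgh, map_add, map_sub, map_sub, orbitSum_smul, sub_self, add_zero,
      orbitSum_map hN t htN ht, ← hB, QuotientAddGroup.map_mk, QuotientAddGroup.mk_sub]
  exact ⟨B, by rw [← QuotientAddGroup.eq_zero_iff, QuotientAddGroup.mk_sub, hmk, sub_self]⟩

end OrbitSum

section SMul

variable {G R : Type*} [Group G] [CommRing R] [MulSemiringAction G R]

lemma dvd_smul_iff (g : G) (a b : R) : a ∣ g • b ↔ g⁻¹ • a ∣ b := by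
  constructor <;> rintro ⟨c, hc⟩
  · exact ⟨g⁻¹ • c, by rw [← smul_mul', ← hc, inv_smul_smul]⟩
  · exact ⟨g • c, by rw [hc, smul_mul', smul_inv_smul]⟩

lemma smul_algebraMap_div {F : Type*} [Field F] [Algebra R F] [MulSemiringAction G F]
    [SMulDistribClass G R F] (g : G) (a s : R) :
    g • (algebraMap R F a / algebraMap R F s) =
      algebraMap R F (g • a) / algebraMap R F (g • s) := by
  rw [smul_div₀', algebraMap.smul', algebraMap.smul']

lemma finite_setOf_dvd_inv_smul [IsDomain R] [UniqueFactorizationMonoid R] {p : R}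
    (hfree : ∀ g : G, p ∣ g • p → g = 1) {b : R} (hb : b ≠ 0) :
    {g : G | p ∣ g⁻¹ • b}.Finite := by
  have hinj : Function.Injective fun g : G ↦ Associates.mk (g • p) := fun g h hgh ↦ by
    have hdvd : p ∣ (g⁻¹ * h) • p := by
      rw [mul_smul, dvd_smul_iff, inv_inv]
      exact (Associates.mk_eq_mk_iff_associated.1 hgh).dvd
    exact inv_mul_eq_one.1 (hfree _ hdvd)
  have hfin : {c | c ∣ Associates.mk b}.Finite := Set.finite_coe_iff.1
    (UniqueFactorizationMonoid.fintypeSubtypeDvd _ (Associates.mk_ne_zero.2 hb)).finite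
  refine (hfin.preimage hinj.injOn).subset fun g hg ↦ ?_
  rwa [Set.mem_ofPred_eq, dvd_smul_iff, inv_inv, ← Associates.mk_dvd_mk] at hg

end SMul

section LocalRingAt

variable {R : Type*} [CommRing R] [IsDomain R] (F : Type*) [Field F] [Algebra R F]
  [IsFractionRing R F] {p : R} (hp : Prime p)

local notation "𝔦" => algebraMap R F

/-- The local ring at a prime element `p` of a domain `R`, realized inside a fraction field of `R`:
the fractions which can be written with a denominator prime to `p`. -/
def localRingAt : Subring F :=
  have := (Ideal.span_singleton_prime hp.ne_zero).2 hp
  (Localization.subalgebra.ofField F (Ideal.span {p}).primeCompl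
    (Ideal.primeCompl_le_nonZeroDivisors _)).toSubring

variable {F}

lemma mem_localRingAt {f : F} : f ∈ localRingAt F hp ↔ ∃ a s, ¬ p ∣ s ∧ f = 𝔦 a / 𝔦 s := by
  change (∃ a s, ∃ _ : s ∉ Ideal.span {p}, f = 𝔦 a * (𝔦 s)⁻¹) ↔ _
  simp only [Ideal.mem_span_singleton, exists_prop, div_eq_mul_inv]

lemma div_mem_localRingAt (a : R) {s : R} (hs : ¬ p ∣ s) : 𝔦 a / 𝔦 s ∈ localRingAt F hp :=
  (mem_localRingAt hp).2 ⟨a, s, hs, rfl⟩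

lemma pow_dvd_of_div_pow_mem_localRingAt {a : R} {m : ℕ}
    (h : 𝔦 a / 𝔦 p ^ m ∈ localRingAt F hp) : p ^ m ∣ a := by
  obtain ⟨b, s, hs, hab⟩ := (mem_localRingAt hp).1 h
  have hs0 : 𝔦 s ≠ 0 := by
    refine (map_ne_zero_iff _ (IsFractionRing.injective R F)).2 ?_
    rintro rfl
    exact hs (dvd_zero p)
  have hp0 : 𝔦 p ≠ 0 := (map_ne_zero_iff _ (IsFractionRing.injective R F)).2 hp.ne_zero
  have hmul : a * s = b * p ^ m := by
    apply IsFractionRing.injective R F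
    rw [map_mul, map_mul, map_pow, (div_eq_div_iff (pow_ne_zero m hp0) hs0).1 hab]
  exact hp.pow_dvd_of_dvd_mul_right m hs ⟨b, by rw [hmul, mul_comm]⟩

lemma exists_sub_div_pow_mem_localRingAt [IsPrincipalIdealRing R] (f : F) :
    ∃ (n : ℕ) (w : R), f - 𝔦 w / 𝔦 p ^ n ∈ localRingAt F hp := by
  obtain ⟨a, b, hb, rfl⟩ := IsFractionRing.div_surjective R f
  have hb0 : b ≠ 0 := nonZeroDivisors.ne_zero hb
  obtain ⟨n, s, hs, rfl⟩ := WfDvdMonoid.max_power_factor hb0 hp.irreducible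
  obtain ⟨u, v, huv⟩ := ((Irreducible.coprime_iff_not_dvd hp.irreducible).2 hs).pow_left (m := n)
  refine ⟨n, a * v, ?_⟩
  have hs0 : 𝔦 s ≠ 0 :=
    (map_ne_zero_iff _ (IsFractionRing.injective R F)).2 (right_ne_zero_of_mul hb0)
  have hp0 : 𝔦 p ≠ 0 := (map_ne_zero_iff _ (IsFractionRing.injective R F)).2 hp.ne_zero
  have heq : 𝔦 a / 𝔦 (p ^ n * s) - 𝔦 (a * v) / 𝔦 p ^ n = 𝔦 (a * u) / 𝔦 s := by
    have := congrArg 𝔦 huv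
    simp only [map_add, map_mul, map_pow, map_one] at this ⊢
    field_simp
    linear_combination (-𝔦 a) * this
  rw [heq]
  exact div_mem_localRingAt hp _ hs

section Action

variable {G : Type*} [Group G] [MulSemiringAction G R] [MulSemiringAction G F]
  [SMulDistribClass G R F]

lemma smul_mem_localRingAt {g : G} (hg : g • p = p) {f : F} (hf : f ∈ localRingAt F hp) :
    g • f ∈ localRingAt F hp := by
  obtain ⟨a, s, hs, rfl⟩ := (mem_localRingAt hp).1 hf
  rw [smul_algebraMap_div]
  refine div_mem_localRingAt hp _ fun h ↦ hs ?_
  rwa [dvd_smul_iff, inv_smul_eq_iff.2 hg.symm] at h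

lemma smul_div_pow_mem_localRingAt {g : G} (hg : ¬ p ∣ g • p) (a : R) (m : ℕ) :
    g • (𝔦 a / 𝔦 p ^ m) ∈ localRingAt F hp := by
  rw [← map_pow, smul_algebraMap_div, smul_pow']
  exact div_mem_localRingAt hp _ fun h ↦ hg (hp.dvd_of_dvd_pow h)

lemma finite_setOf_smul_notMem_localRingAt [UniqueFactorizationMonoid R]
    (hfree : ∀ g : G, p ∣ g • p → g = 1) (f : F) :
    {g : G | g⁻¹ • f ∉ localRingAt F hp}.Finite := by
  obtain ⟨a, b, hb, rfl⟩ := IsFractionRing.div_surjective R f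
  refine (finite_setOf_dvd_inv_smul hfree (nonZeroDivisors.ne_zero hb)).subset fun g hg ↦ ?_
  by_contra hdvd
  exact hg (by rw [smul_algebraMap_div]; exact div_mem_localRingAt hp _ hdvd)

include hp in
lemma pow_dvd_of_eq_smul_sub_add_smul_sub [UniqueFactorizationMonoid R]
    (hfree : ∀ g : G, p ∣ g • p → g = 1) {a : R} {m : ℕ} {τ σ : G} {g h : F}
    (hexact : 𝔦 a / 𝔦 p ^ m = (τ • g - g) + (σ • h - h)) : p ^ m ∣ a :=
  pow_dvd_of_div_pow_mem_localRingAt hp <|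
    mem_of_eq_smul_sub_add_smul_sub (N := (localRingAt F hp).toAddSubgroup)
      (finite_setOf_smul_notMem_localRingAt hp hfree)
      (fun γ hγ ↦ smul_div_pow_mem_localRingAt hp (mt (hfree γ) hγ) a m) hexact

include hp in
lemma exists_pow_dvd_sub_smul_sub [IsPrincipalIdealRing R]
    {H : Type*} [Group H] [MulSemiringAction H R] [MulSemiringAction H F] [SMulDistribClass H R F]
    [SMulCommClass H G F]
    (hfree : ∀ g : G, p ∣ g • p → g = 1) {τ : H} (hτ : τ • p = p) {a : R} {m : ℕ} {σ : G} {g h : F}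
    (hexact : 𝔦 a / 𝔦 p ^ m = (τ • g - g) + (σ • h - h)) :
    ∃ (n : ℕ) (w : R), p ^ (m + n) ∣ a * p ^ n - (τ • w - w) := by
  obtain ⟨B, hB⟩ := exists_sub_map_sub_mem (N := (localRingAt F hp).toAddSubgroup)
    (t := DistribSMul.toAddMonoidHom F τ) (finite_setOf_smul_notMem_localRingAt hp hfree)
    (fun f hf ↦ smul_mem_localRingAt hp hτ hf) (fun γ f ↦ smul_comm τ γ f)
    (fun γ hγ ↦ smul_div_pow_mem_localRingAt hp (mt (hfree γ) hγ) a m) hexact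
  obtain ⟨n, w, hw⟩ := exists_sub_div_pow_mem_localRingAt hp B
  refine ⟨n, p ^ m * w, pow_dvd_of_div_pow_mem_localRingAt (F := F) hp ?_⟩
  have hp0 : 𝔦 p ≠ 0 := (map_ne_zero_iff _ (IsFractionRing.injective R F)).2 hp.ne_zero
  have heq : 𝔦 (a * p ^ n - (τ • (p ^ m * w) - p ^ m * w)) / 𝔦 p ^ (m + n) =
      (𝔦 a / 𝔦 p ^ m - (τ • B - B)) + (τ • (B - 𝔦 w / 𝔦 p ^ n) - (B - 𝔦 w / 𝔦 p ^ n)) := by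
    rw [smul_sub, ← map_pow, ← map_pow, ← map_pow, smul_algebraMap_div, smul_mul', smul_pow',
      smul_pow', hτ]
    simp only [map_sub, map_mul, map_pow]
    field_simp
    ring
  rw [heq]
  exact add_mem hB (sub_mem (smul_mem_localRingAt hp hτ hw) hw)

end Action

end LocalRingAt

lemma exists_eq_map_sub_of_pow_dvd {K : Type*} [Field K] {φ : K →+* K} {P : K[X]} (hP : P ≠ 0)
    (hφP : P.map φ = P) {a w : K[X]} {n : ℕ} (ha : a.degree < P.degree)
    (hdvd : P ^ (n + 1) ∣ a * P ^ n - (w.map φ - w)) : ∃ b : K[X], a = b.map φ - b := by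
  obtain ⟨c, hc⟩ := hdvd
  have hw : (w % P ^ n).map φ = w % P ^ n := by
    rw [← sub_eq_zero, Polynomial.map_mod, Polynomial.map_pow, hφP, ← Polynomial.sub_mod,
      EuclideanDomain.mod_eq_zero]
    exact ⟨a - P * c, by linear_combination -hc⟩
  set B := w / P ^ n
  have hB : w.map φ - w = P ^ n * (B.map φ - B) := by
    conv_lhs => rw [← EuclideanDomain.div_add_mod w (P ^ n)]
    rw [Polynomial.map_add, hw, Polynomial.map_mul, Polynomial.map_pow, hφP]
    ring
  have haB : a - (B.map φ - B) = P * c := by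
    apply mul_left_cancel₀ (pow_ne_zero n hP)
    linear_combination hc + hB
  refine ⟨B % P, ?_⟩
  calc a = a % P := (mod_eq_self_iff hP |>.2 ha).symm
    _ = (B.map φ - B) % P := by rw [← sub_eq_zero, ← Polynomial.sub_mod, haB]; simp
    _ = (B % P).map φ - B % P := by rw [Polynomial.sub_mod, Polynomial.map_mod, hφP]

lemma coeff_taylor_of_natDegree_eq_succ {A : Type*} [CommRing A] {p : A[X]} {n : ℕ}
    (hp : p.natDegree = n + 1) (r : A) :
    (taylor r p).coeff n = p.coeff n + (n + 1) * r * p.coeff (n + 1) := by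
  have hn : (hasseDeriv n p).natDegree < 2 := by
    have := natDegree_hasseDeriv_le p n
    omega
  rw [taylor_coeff, eval_eq_sum_range' hn, Finset.sum_range_succ, Finset.sum_range_one,
    hasseDeriv_coeff, hasseDeriv_coeff, zero_add, Nat.choose_self, add_comm 1 n,
    Nat.choose_succ_self_right]
  push_cast
  ring

section Substitution

variable {K U A : Type*} [Field K] [Group U] [CommRing A]

/-- The automorphism `x ↦ u x` of `K[x]`, as a homomorphism in the unit `u`. -/
def scaleAut (K : Type*) [Field K] : Kˣ →* RingAut K[X] where
  toFun u := (algEquivOfCompEqX (C (u : K) * X) (C (↑u⁻¹ : K) * X)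
    (by simp [← mul_assoc, ← C_mul]) (by simp [← mul_assoc, ← C_mul])).toRingEquiv
  map_one' := by ext p : 1; simp
  map_mul' u v := by
    ext p : 1
    simp [RingAut.mul_apply, ← comp_eq_aeval, comp_assoc, mul_left_comm, mul_assoc]

lemma scaleAut_apply (u : Kˣ) (p : K[X]) : scaleAut K u p = p.comp (C (u : K) * X) :=
  rfl

lemma coeff_scaleAut (u : Kˣ) (p : K[X]) (s : ℕ) :
    (scaleAut K u p).coeff s = p.coeff s * (u : K) ^ s :=
  comp_C_mul_X_coeff

/-- Given a group `U` acting on `A`, the pair `(u, j)` acts on `A[y]` through `u` on the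
coefficients and by `y ↦ y + j`. -/
def shiftAut (φ : U →* RingAut A) : U × Multiplicative ℤ →* RingAut A[X] where
  toFun g := (mapEquiv (φ g.1)).trans (taylorEquiv (g.2.toAdd : A)).toRingEquiv
  map_one' := by
    ext p : 1
    change taylor ((0 : ℤ) : A) (p.map (φ 1 : A →+* A)) = p
    rw [map_one, Int.cast_zero, taylor_zero]
    exact Polynomial.map_id
  map_mul' g h := by
    ext p : 1
    change taylor ((g.2.toAdd + h.2.toAdd : ℤ) : A) (p.map (φ (g.1 * h.1) : A →+* A)) =
      taylor _ ((taylor _ (p.map (φ h.1 : A →+* A))).map (φ g.1 : A →+* A))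
    rw [map_taylor, taylor_taylor, Polynomial.map_map, map_mul, map_intCast, Int.cast_add]
    rfl

lemma shiftAut_apply (φ : U →* RingAut A) (g : U × Multiplicative ℤ) (p : A[X]) :
    shiftAut φ g p = taylor (g.2.toAdd : A) (p.map (φ g.1 : A →+* A)) := rfl

end Substitution

section OrbitOfPolynomial

variable {K : Type*} [Field K] {d : K[X][X]}

lemma exists_apply_eq_C_mul_of_dvd_apply {T : RingAut K[X][X]} (hd : Irreducible d)
    (hdvd : d ∣ T d) : ∃ c : K, T d = C (C c) * d := by
  have hTd : Irreducible (T d) := (MulEquiv.irreducible_iff T).2 hd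
  obtain ⟨u, hu⟩ := hd.associated_of_dvd hTd hdvd
  obtain ⟨r, hr, hru⟩ := Polynomial.isUnit_iff.1 u.isUnit
  obtain ⟨c, -, hcr⟩ := Polynomial.isUnit_iff.1 hr
  exact ⟨c, by rw [hcr, hru, ← hu, mul_comm]⟩

lemma exists_coeff_coeff_natDegree_ne_zero (hd : d ≠ 0) :
    ∃ s, (d.coeff d.natDegree).coeff s ≠ 0 := by
  by_contra! h
  exact leadingCoeff_ne_zero.2 hd (Polynomial.ext h)

lemma coeff_coeff_natDegree_shiftAut (g : Kˣ × Multiplicative ℤ) (s : ℕ) :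
    ((shiftAut (scaleAut K) g d).coeff d.natDegree).coeff s =
      (d.coeff d.natDegree).coeff s * (g.1 : K) ^ s := by
  have hmap : (d.map (scaleAut K g.1 : K[X] →+* K[X])).natDegree = d.natDegree :=
    natDegree_map_eq_of_injective (scaleAut K g.1).injective d
  rw [shiftAut_apply, ← hmap, coeff_taylor_natDegree, ← coeff_natDegree, coeff_map, hmap]
  exact coeff_scaleAut g.1 _ s

lemma snd_eq_one_of_shiftAut_eq [CharZero K] (hd : 0 < d.natDegree) {g : Kˣ × Multiplicative ℤ}
    {c : K} (hg : shiftAut (scaleAut K) g d = C (C c) * d) : g.2 = 1 := by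
  obtain ⟨s, hs⟩ := exists_coeff_coeff_natDegree_ne_zero (ne_zero_of_natDegree_gt hd)
  have hlead := coeff_coeff_natDegree_shiftAut (d := d) g s
  obtain ⟨n, hn⟩ := Nat.exists_eq_add_one.2 hd
  have hmap : (d.map (scaleAut K g.1 : K[X] →+* K[X])).natDegree = n + 1 :=
    hn ▸ natDegree_map_eq_of_injective (scaleAut K g.1).injective d
  have hnext : ((shiftAut (scaleAut K) g d).coeff n).coeff s = (d.coeff n).coeff s * (g.1 : K) ^ s +
      (n + 1) * g.2.toAdd * ((d.coeff (n + 1)).coeff s * (g.1 : K) ^ s) := by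
    rw [shiftAut_apply, coeff_taylor_of_natDegree_eq_succ hmap, coeff_map, coeff_map, coeff_add,
      ← coeff_scaleAut, ← coeff_scaleAut]
    have : ((n : K[X]) + 1) * (g.2.toAdd : K[X]) = C (((n : K) + 1) * g.2.toAdd) := by simp
    rw [this, coeff_C_mul]
    rfl
  rw [hg, coeff_C_mul, coeff_C_mul] at hlead hnext
  rw [hn] at hs hlead
  have hc : c = (g.1 : K) ^ s := by
    apply mul_left_cancel₀ hs
    rw [← hlead, mul_comm]
  have hj : ((n + 1 : ℕ) : K) * g.2.toAdd * ((d.coeff (n + 1)).coeff s * (g.1 : K) ^ s) = 0 := by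
    rw [hc] at hnext
    push_cast
    linear_combination -hnext
  simpa [hs, Nat.cast_add_one_ne_zero] using hj

lemma exists_eq_PY_of_shiftAut_eq (hd : Irreducible d) (hdeg : 0 < d.natDegree) {u : Kˣ}
    (hu : ¬ IsOfFinOrder u) {c : K} (hg : shiftAut (scaleAut K) (u, 1) d = C (C c) * d) :
    ∃ e : K[X], d = PY K e := by
  obtain ⟨s, hs⟩ := exists_coeff_coeff_natDegree_ne_zero hd.ne_zero
  have hcoeff (t i : ℕ) : c * (d.coeff t).coeff i = (d.coeff t).coeff i * (u : K) ^ i := by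
    rw [← coeff_scaleAut, ← coeff_C_mul, ← coeff_C_mul, ← hg, shiftAut_apply]
    simp
  have hc : c = (u : K) ^ s := mul_left_cancel₀ hs (by rw [← hcoeff, mul_comm])
  have hzero (t i : ℕ) (hi : i ≠ s) : (d.coeff t).coeff i = 0 := by
    by_contra h
    have : u ^ i = u ^ s := by
      ext
      push_cast
      rw [← hc]
      exact mul_left_cancel₀ h (by rw [← hcoeff, mul_comm])
    exact hi (injective_pow_iff_not_isOfFinOrder.2 hu this)
  have hdvd : C (X ^ s) ∣ d := by
    rw [C_dvd_iff_dvd_coeff]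
    exact fun t ↦ X_pow_dvd_iff.2 fun i hi ↦ hzero t i hi.ne
  obtain rfl : s = 0 := by
    have := (hd.isPrimitive hdeg.ne') _ hdvd
    by_contra h
    exact not_isUnit_X ((isUnit_pow_iff h).1 this)
  have hlifts : d ∈ lifts (C : K →+* K[X]) := (lifts_iff_coeff_lifts _).2 fun t ↦
    ⟨(d.coeff t).coeff 0, Polynomial.ext fun i ↦ by
      obtain rfl | hi := eq_or_ne i 0
      · rw [coeff_C_zero]
      · rw [coeff_C_of_ne_zero hi, hzero t i hi]⟩
  obtain ⟨e, he⟩ := (mem_lifts _).1 hlifts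
  exact ⟨e, he.symm⟩

end OrbitOfPolynomial

section RationalFunctions

variable {K : Type*} [Field K]

/-- The automorphism `x ↦ u x` of `K(x)`, as a homomorphism in the unit `u`. -/
def ratScaleAut (K : Type*) [Field K] : Kˣ →* RingAut (RatFunc K) :=
  (IsFractionRing.ringEquivOfRingEquivHom K[X] (RatFunc K)).comp (scaleAut K)

lemma ratScaleAut_algebraMap (u : Kˣ) (p : K[X]) :
    ratScaleAut K u (algebraMap K[X] (RatFunc K) p) =
      algebraMap K[X] (RatFunc K) (scaleAut K u p) :=
  IsFractionRing.ringEquivOfRingEquiv_algebraMap ..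

/-- The group of the substitutions `x ↦ u x`, `y ↦ y + j` of `K(x,y)`, given by the pairs
`(u, j)`. -/
abbrev ShiftGroup (K : Type*) [Field K] := Kˣ × Multiplicative ℤ

/-- The pair `(u, j)` sends `f(x, y)` in `K(x)[y]` to `f(u x, y + j)`. -/
instance : MulSemiringAction (ShiftGroup K) (RatFunc K)[X] :=
  MulSemiringAction.compHom _ (shiftAut (ratScaleAut K))

/-- The action on `K(x)[y]`, extended to its fraction field. -/
instance : MulSemiringAction (ShiftGroup K) (F2 K) :=
  IsFractionRing.mulSemiringAction _ (RatFunc K)[X] _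

instance : SMulDistribClass (ShiftGroup K) (RatFunc K)[X] (F2 K) :=
  IsFractionRing.smulDistribClass ..

lemma smul_eq_taylor_map (g : ShiftGroup K) (p : (RatFunc K)[X]) :
    g • p = taylor (g.2.toAdd : RatFunc K) (p.map (ratScaleAut K g.1 : RatFunc K →+* RatFunc K)) :=
  rfl

lemma smul_FP (g : ShiftGroup K) (p : (RatFunc K)[X]) : g • FP K p = FP K (g • p) :=
  (algebraMap.smul' ..).symm

lemma smul_PP (g : ShiftGroup K) (d : K[X][X]) :
    g • PP K d = PP K (shiftAut (scaleAut K) g d) := by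
  have hcomp : (ratScaleAut K g.1 : RatFunc K →+* RatFunc K).comp (algebraMap K[X] (RatFunc K)) =
      (algebraMap K[X] (RatFunc K)).comp (scaleAut K g.1 : K[X] →+* K[X]) :=
    RingHom.ext (ratScaleAut_algebraMap g.1)
  rw [smul_eq_taylor_map, shiftAut_apply, PP, coe_mapRingHom, map_taylor, map_map, map_map,
    map_intCast, hcomp]

lemma smul_PP_PY (u : Kˣ) (e : K[X]) : ((u, 1) : ShiftGroup K) • PP K (PY K e) = PP K (PY K e) := by
  have hcomp : (scaleAut K u : K[X] →+* K[X]).comp C = C :=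
    RingHom.ext fun c ↦ (scaleAut_apply u (C c)).trans C_comp
  rw [smul_PP, shiftAut_apply, PY, coe_mapRingHom, map_map, hcomp]
  simp

lemma smul_Fc (g : ShiftGroup K) (c : K) : g • Fc K c = Fc K c := by
  have h : Fc K c = FPP K (C (C c)) := by simp [Fc, FPP, FP, PP]
  rw [h, FPP, RingHom.comp_apply, smul_FP, smul_PP, shiftAut_apply, map_C, taylor_C,
    RingHom.coe_coe, scaleAut_apply, C_comp]

lemma smul_Fx (g : ShiftGroup K) : g • Fx K = Fc K g.1 * Fx K := by
  have h : Fx K = FPP K (C X) := by simp [Fx, FPP, FP, PP]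
  have hc : Fc K g.1 = FPP K (C (C g.1)) := by simp [Fc, FPP, FP, PP]
  rw [h, hc, ← map_mul, ← C_mul, FPP, RingHom.comp_apply, RingHom.comp_apply, smul_FP, smul_PP,
    shiftAut_apply, map_C, taylor_C, RingHom.coe_coe, scaleAut_apply, X_comp]

lemma smul_Fy (g : ShiftGroup K) : g • Fy K = Fy K + g.2.toAdd := by
  have h : Fy K = FP K X := by simp [Fy, FP]
  rw [h, smul_FP, smul_eq_taylor_map]
  simp

lemma ringHom_ext_of_Fx_Fy {φ ψ : F2 K →+* F2 K} (hc : ∀ c, φ (Fc K c) = ψ (Fc K c))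
    (hx : φ (Fx K) = ψ (Fx K)) (hy : φ (Fy K) = ψ (Fy K)) : φ = ψ := by
  refine IsLocalization.ringHom_ext (nonZeroDivisors (RatFunc K)[X]) (Polynomial.ringHom_ext' ?_ ?_)
  · refine IsLocalization.ringHom_ext (nonZeroDivisors K[X]) (Polynomial.ringHom_ext ?_ ?_)
    · simpa [Fc] using hc
    · simpa [Fx] using hx
  · simpa [Fy] using hy

lemma IsQShiftX.apply_eq_smul {q : Kˣ} {τ : F2 K ≃+* F2 K} (hτ : IsQShiftX (q : K) τ) (f : F2 K) :
    τ f = ((q, 1) : ShiftGroup K) • f := by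
  refine RingHom.congr_fun (f := (τ : F2 K →+* F2 K))
    (g := MulSemiringAction.toRingHom _ _ ((q, 1) : ShiftGroup K)) (ringHom_ext_of_Fx_Fy ?_ ?_ ?_) f
  · simp [smul_Fc, hτ.1]
  · simp [smul_Fx, hτ.2.2]
  · simp [smul_Fy, hτ.2.1]

lemma IsShiftY.apply_eq_smul {σ : F2 K ≃+* F2 K} (hσ : IsShiftY σ) (f : F2 K) :
    σ f = ((1, Multiplicative.ofAdd 1) : ShiftGroup K) • f := by
  refine RingHom.congr_fun (f := (σ : F2 K →+* F2 K))
    (g := MulSemiringAction.toRingHom _ _ ((1, Multiplicative.ofAdd 1) : ShiftGroup K))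
    (ringHom_ext_of_Fx_Fy ?_ ?_ ?_) f
  · simp [smul_Fc, hσ.1]
  · simp [smul_Fx, hσ.2.1]
  · simp [smul_Fy, hσ.2.2]

end RationalFunctions

section Exactness

variable {K : Type*} [Field K] {d : K[X][X]}

lemma prime_PP (hd : Irreducible d) (hdeg : 0 < d.natDegree) : Prime (PP K d) :=
  ((hd.isPrimitive hdeg.ne').irreducible_iff_irreducible_map_fraction_map (K := RatFunc K)).1 hd
    |>.prime

lemma exists_shiftAut_eq_of_PP_dvd_smul (hd : Irreducible d) (hdeg : 0 < d.natDegree)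
    {g : ShiftGroup K} (hdvd : PP K d ∣ g • PP K d) :
    ∃ c : K, shiftAut (scaleAut K) g d = C (C c) * d := by
  rw [smul_PP] at hdvd
  exact exists_apply_eq_C_mul_of_dvd_apply hd
    ((hd.isPrimitive hdeg.ne').dvd_of_fraction_map_dvd_fraction_map (K := RatFunc K) hdvd)

lemma snd_eq_one_of_PP_dvd_smul [CharZero K] (hd : Irreducible d) (hdeg : 0 < d.natDegree)
    {g : ShiftGroup K} (hdvd : PP K d ∣ g • PP K d) : g.2 = 1 :=
  have ⟨_, hc⟩ := exists_shiftAut_eq_of_PP_dvd_smul hd hdeg hdvd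
  snd_eq_one_of_shiftAut_eq hdeg hc

lemma exists_eq_PY_of_PP_dvd_smul [CharZero K] (hd : Irreducible d) (hdeg : 0 < d.natDegree)
    {g : ShiftGroup K} (hg : ¬ IsOfFinOrder g.1) (hdvd : PP K d ∣ g • PP K d) :
    ∃ e : K[X], d = PY K e := by
  obtain ⟨c, hc⟩ := exists_shiftAut_eq_of_PP_dvd_smul hd hdeg hdvd
  obtain ⟨u, j⟩ := g
  obtain rfl : j = 1 := snd_eq_one_of_PP_dvd_smul hd hdeg hdvd
  exact exists_eq_PY_of_shiftAut_eq hd hdeg hg hc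

variable {q : Kˣ} {τ σ : F2 K ≃+* F2 K} {a : (RatFunc K)[X]} {m : ℕ} {g h : F2 K}

lemma PP_pow_dvd_of_exact [CharZero K] (hq : ¬ IsOfFinOrder q) (hτ : IsQShiftX (q : K) τ)
    (hσ : IsShiftY σ) (hd : Irreducible d) (hdeg : 0 < d.natDegree) (hdy : ¬ ∃ e, d = PY K e)
    (hexact : FP K a / FPP K d ^ m = (τ g - g) + (σ h - h)) : PP K d ^ m ∣ a := by
  let G : Subgroup (ShiftGroup K) := (Subgroup.zpowers q).prod ⊤
  have hfree : ∀ γ : G, PP K d ∣ γ • PP K d → γ = 1 := by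
    rintro ⟨⟨u, j⟩, hu, _⟩ hγ
    obtain ⟨i, rfl : q ^ i = u⟩ := Subgroup.mem_zpowers_iff.1 hu
    obtain rfl : j = 1 := snd_eq_one_of_PP_dvd_smul hd hdeg hγ
    obtain rfl | hi := eq_or_ne i 0
    · ext <;> simp
    · exact absurd (exists_eq_PY_of_PP_dvd_smul hd hdeg (mt (isOfFinOrder_of_zpow hi) hq) hγ) hdy
  refine pow_dvd_of_eq_smul_sub_add_smul_sub (prime_PP hd hdeg) hfree
    (τ := ⟨(q, 1), Subgroup.mem_zpowers q, trivial⟩)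
    (σ := ⟨(1, Multiplicative.ofAdd 1), one_mem _, trivial⟩) (g := g) (h := h) ?_
  rwa [hτ.apply_eq_smul, hσ.apply_eq_smul] at hexact

lemma exists_eq_map_sub_of_exact [CharZero K] (hτ : IsQShiftX (q : K) τ)
    (hσ : IsShiftY σ) {e : K[X]} (hd : Irreducible (PY K e)) (hdeg : 0 < (PY K e).natDegree)
    (ha : a.degree < (PP K (PY K e)).degree) (hm : 1 ≤ m)
    (hexact : FP K a / FPP K (PY K e) ^ m = (τ g - g) + (σ h - h)) :
    ∃ b : (RatFunc K)[X], FP K a = τ (FP K b) - FP K b := by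
  let G : Subgroup (ShiftGroup K) := (⊥ : Subgroup Kˣ).prod ⊤
  have hfree : ∀ γ : G, PP K (PY K e) ∣ γ • PP K (PY K e) → γ = 1 := by
    rintro ⟨⟨u, j⟩, hu, _⟩ hγ
    obtain rfl : u = 1 := hu
    obtain rfl : j = 1 := snd_eq_one_of_PP_dvd_smul hd hdeg hγ
    rfl
  rw [hτ.apply_eq_smul, hσ.apply_eq_smul] at hexact
  have hfix : ((q, 1) : ShiftGroup K) • PP K (PY K e) = PP K (PY K e) := smul_PP_PY q e
  obtain ⟨n, w, hw⟩ := exists_pow_dvd_sub_smul_sub (prime_PP hd hdeg) hfree hfix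
    (σ := ⟨(1, Multiplicative.ofAdd 1), one_mem _, trivial⟩) (g := g) (h := h) hexact
  have hmap (p : (RatFunc K)[X]) : ((q, 1) : ShiftGroup K) • p =
      p.map (ratScaleAut K q : RatFunc K →+* RatFunc K) := by
    simp [smul_eq_taylor_map]
  simp only [hmap] at hw hfix
  obtain ⟨b, hb⟩ := exists_eq_map_sub_of_pow_dvd (prime_PP hd hdeg).ne_zero hfix ha
    ((pow_dvd_pow _ (by omega)).trans hw)
  exact ⟨b, by rw [hτ.apply_eq_smul, smul_FP, hmap, ← map_sub, ← hb]⟩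

end Exactness

/-- Lemma 4: let `q ∈ k \ {0}` not be a root of unity, and let
`f = a/d^m` with `m ≥ 1`, `d ∈ k[x,y]` irreducible, and `a ∈ k(x)[y]` nonzero with
`deg_y(a) < deg_y(d)`. Then `f` is exact with respect to `(Δ_{x,q}, Δ_y)`, i.e.
`f = Δ_{x,q}(g) + Δ_y(h)` for some `g, h ∈ k(x,y)`, iff `d ∈ k[y]` and
`a = Δ_{x,q}(b)` for some `b ∈ k(x)[y]`. -/
theorem stmt14 {k : Type*} [Field k] [CharZero k]
    (q : k) (hq : q ≠ 0) (hqru : NotRootOfUnity q)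
    (τ : F2 k ≃+* F2 k) (hτ : IsQShiftX q τ)
    (σy : F2 k ≃+* F2 k) (hσy : IsShiftY σy)
    (m : ℕ) (hm : 1 ≤ m)
    (d : Polynomial (Polynomial k)) (hd : Irreducible d)
    (a : Polynomial (RatFunc k)) (ha : a ≠ 0) (hdeg : a.degree < d.degree)
    (f : F2 k) (hf : f = FP k a / FPP k d ^ m) :
    (∃ g h : F2 k, f = (τ g - g) + (σy h - h)) ↔
    ((∃ e : Polynomial k, d = PY k e) ∧
      ∃ b : Polynomial (RatFunc k), FP k a = τ (FP k b) - FP k b) := by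
  lift q to kˣ using hq.isUnit
  subst hf
  have hq' : ¬ IsOfFinOrder q := by
    rw [isOfFinOrder_iff_pow_eq_one]
    rintro ⟨n, hn, hqn⟩
    exact hqru n hn (by rw [← Units.val_pow_eq_pow_val, hqn, Units.val_one])
  have hd0 : 0 < d.natDegree :=
    natDegree_pos_iff_degree_pos.2 ((zero_le_degree_iff.2 ha).trans_lt hdeg)
  have hPdeg : (PP k d).degree = d.degree :=
    degree_map_eq_of_injective (RatFunc.algebraMap_injective k) d
  rw [← hPdeg] at hdeg
  constructor
  · rintro ⟨g, h, hexact⟩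
    obtain ⟨e, rfl⟩ : ∃ e, d = PY k e := by
      by_contra hdy
      exact ha (eq_zero_of_dvd_of_degree_lt ((dvd_pow_self _ (by omega)).trans
        (PP_pow_dvd_of_exact hq' hτ hσy hd hd0 hdy hexact)) hdeg)
    exact ⟨⟨e, rfl⟩, exists_eq_map_sub_of_exact hτ hσy hd hd0 hdeg hm hexact⟩
  · rintro ⟨⟨e, rfl⟩, b, hb⟩
    have hfix : τ (FPP k (PY k e)) = FPP k (PY k e) := by
      rw [hτ.apply_eq_smul, FPP, RingHom.comp_apply, smul_FP, smul_PP_PY]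
    exact ⟨FP k b / FPP k (PY k e) ^ m, 0, by rw [hb, map_div₀, map_pow, hfix]; simp [sub_div]⟩
end
end
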